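/- For a ring A, the following are equivalent: (1) the right A-module A is ℵ₀-distributive and A satisfies the minimum condition on principal left ideals; (2) A is right Artinian. -/

import Mathlib

/-!
(1) ⇒ (2). Write `J` for the Jacobson radical of `A`. The minimum condition on principal left ideals
makes `A ⧸ J` semisimple (`MinPrincipalLeft.isSemisimpleRing`) and gives every sequence
`a₁, a₂, …` in `J` an `n` with `aₙ ⋯ a₁ = 0` (`MinPrincipalLeft.tNilpotent`). Hence Nakayama's lemma
`N J = N → N = 0` holds for arbitrary right modules `N` (`IsTNilpotent.subsingleton`). If `N` is a
right ideal, then `N ⧸ N J` is a semisimple module with finitely many isotypic components, each of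
which is a subfactor of `A` and so, by `ℵ₀`-distributivity, of finite length; by Nakayama `N` is
finitely generated. So `A` is right Noetherian (`IsAleph0Distributive.isNoetherian`), whence `J`,
being T-nilpotent, is nilpotent (`IsTNilpotent.isNilpotent`), and the Hopkins-Levitzki theorem
finishes.

(2) ⇒ (1). A module that is both Artinian and Noetherian has no infinite independent family of
nonzero submodules in any subfactor, which gives `ℵ₀`-distributivity. For the minimum condition
(`MinPrincipalLeft.of_isArtinian`), let `a (n + 1) = c n * a n` and put
`P n k = c (n + k - 1) * ⋯ * c n`. The right ideals `P n k A` have finite length; their eventual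
lengths are nondecreasing in `n` and bounded, so for a fixed large `n` and any `j` there are `k` and
`t` with `P n (j + k) * t = P (n + j) k`. Then
`P n (j + k) * (1 - t * P n j) = 0`.
The right annihilators of the `P n k` stabilize at some `k₀`, and with `j = k₀ + 1` this yields
`P n k₀ = P n k₀ * t * P n (k₀ + 1)`; multiplying by `a n` gives `a (n + k₀) ∈ A a (n + k₀ + 1)`, so
the chain of the `A a n` is not strictly descending.

Right `A`-modules are left modules over `Aᵐᵒᵖ`; the module-theoretic part is stated for left modules
over a ring `R`.
-/

universe u

open Submodule

/-- A module `M` is `ℵ₀`-distributive if no subfactor of `M` (quotient of a submodule)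
is (isomorphic to) a direct sum of infinitely many pairwise isomorphic simple modules.
The direct sum condition is phrased internally: the subfactor has no independent spanning
family, indexed by an infinite type, of pairwise isomorphic simple submodules. -/
def IsAleph0Distributive (R M : Type u) [Ring R] [AddCommGroup M] [Module R M] : Prop :=
  ¬ ∃ (N : Submodule R M) (P : Submodule R N) (ι : Type u) (_ : Infinite ι)
      (T : ι → Submodule R (N ⧸ P)),
      iSupIndep T ∧ iSup T = ⊤ ∧ (∀ i, IsSimpleModule R (T i)) ∧
        ∀ i j, Nonempty ((T i) ≃ₗ[R] (T j))

/-- A module is distributive if its lattice of submodules is distributive. -/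
def IsDistributiveModule (R M : Type u) [Ring R] [AddCommGroup M] [Module R M] : Prop :=
  ∀ X Y Z : Submodule R M, X ⊓ (Y ⊔ Z) = X ⊓ Y ⊔ X ⊓ Z

/-- A module is completely cyclic if every submodule is cyclic. -/
def IsCompletelyCyclic (R M : Type u) [Ring R] [AddCommGroup M] [Module R M] : Prop :=
  ∀ N : Submodule R M, ∃ m : M, N = span R {m}

/-- A module is Bezout if every finitely generated submodule is cyclic. -/
def IsBezoutModule (R M : Type u) [Ring R] [AddCommGroup M] [Module R M] : Prop :=
  ∀ N : Submodule R M, N.FG → ∃ m : M, N = span R {m}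

/-- A ring satisfies the minimum condition on principal right ideals if there is no
infinite strictly descending chain of principal right ideals. -/
def MinPrincipalRight (A : Type u) [Ring A] : Prop :=
  ¬ ∃ a : ℕ → A, StrictAnti fun n => span Aᵐᵒᵖ ({a n} : Set A)

/-- A ring satisfies the minimum condition on principal left ideals if there is no
infinite strictly descending chain of principal left ideals. -/
def MinPrincipalLeft (A : Type u) [Ring A] : Prop :=
  ¬ ∃ a : ℕ → A, StrictAnti fun n => span A ({a n} : Set A)

/-- A module is indecomposable if it is nonzero and is not the direct sum of two
nonzero submodules. -/
def IsIndecomposableModule (R M : Type u) [Ring R] [AddCommGroup M] [Module R M] : Prop :=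
  Nontrivial M ∧ ∀ N P : Submodule R M, IsCompl N P → N = ⊥ ∨ P = ⊥

/-- A ring `A` has (right) finite representation type if it is right Artinian and has,
up to isomorphism, only finitely many finitely generated indecomposable right modules
(every finitely generated module is isomorphic to a quotient of some `Aⁿ`, so the
representatives may be taken of this form). -/
def HasFiniteRepresentationType (A : Type u) [Ring A] : Prop :=
  IsArtinian Aᵐᵒᵖ A ∧
    ∃ (n : ℕ) (k : Fin n → ℕ) (N : ∀ i, Submodule Aᵐᵒᵖ (Fin (k i) → A)),
      ∀ (M : Type u) [AddCommGroup M] [Module Aᵐᵒᵖ M],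
        Module.Finite Aᵐᵒᵖ M → IsIndecomposableModule Aᵐᵒᵖ M →
          ∃ i, Nonempty (M ≃ₗ[Aᵐᵒᵖ] ((Fin (k i) → A) ⧸ N i))

/-- `M` has only finitely many simple subfactors up to isomorphism. -/
def FinitelyManySimpleSubfactors (R M : Type u) [Ring R] [AddCommGroup M] [Module R M] : Prop :=
  ∃ (n : ℕ) (N : Fin n → Submodule R M) (P : ∀ i, Submodule R (N i)),
    ∀ (N' : Submodule R M) (P' : Submodule R N'), IsSimpleModule R (N' ⧸ P') →
      ∃ i, Nonempty ((N' ⧸ P') ≃ₗ[R] (N i ⧸ P i))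

/-- A module is semi-Artinian if every nonzero quotient module contains a simple submodule. -/
def IsSemiArtinianModule (R M : Type u) [Ring R] [AddCommGroup M] [Module R M] : Prop :=
  ∀ N : Submodule R M, N ≠ ⊤ → ∃ S : Submodule R (M ⧸ N), IsSimpleModule R S

/-- A ring is semilocal if its quotient by the Jacobson radical is semisimple. -/
def IsSemilocalRing (A : Type u) [Ring A] : Prop :=
  IsSemisimpleModule A (A ⧸ Ideal.jacobson (⊥ : Ideal A))

/-- A ring is semiprimary if it is semilocal and its Jacobson radical is nilpotent. -/
def IsSemiprimaryRing' (A : Type u) [Ring A] : Prop :=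
  IsSemilocalRing A ∧ ∃ n : ℕ, 0 < n ∧ ∀ f : Fin n → A,
    (∀ i, f i ∈ Ideal.jacobson (⊥ : Ideal A)) → (List.ofFn f).prod = 0

/-! ### The minimum condition on principal left ideals -/

/-- Transfer of the chain condition along a surjection: a descending chain of principal left
ideals of the quotient lifts to one upstairs. -/
theorem MinPrincipalLeft.of_surjective {A B : Type u} [Ring A] [Ring B] (h : MinPrincipalLeft A)
    (f : A →+* B) (hf : Function.Surjective f) : MinPrincipalLeft B := by
  rintro ⟨b, hb⟩
  have h1 (n : ℕ) : ∃ c : A, f c * b n = b (n + 1) := by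
    have h2 : b (n + 1) ∈ span B {b n} := (hb n.lt_succ_self).le (mem_span_singleton_self _)
    obtain ⟨c, hc⟩ := mem_span_singleton.1 h2
    obtain ⟨c, rfl⟩ := hf c
    exact ⟨c, hc⟩
  choose c hc using h1
  obtain ⟨a₀, ha₀⟩ := hf (b 0)
  let a : ℕ → A := fun n => Nat.rec a₀ (fun n x => c n * x) n
  have ha (n : ℕ) : f (a n) = b n := by
    induction n with
    | zero => exact ha₀
    | succ n ih => rw [← hc n, ← ih, ← map_mul]
  refine h ⟨a, strictAnti_nat_of_succ_lt fun n => lt_of_le_not_ge ?_ fun hle => ?_⟩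
  · exact span_singleton_le_iff_mem _ _ |>.2 (mem_span_singleton.2 ⟨c n, rfl⟩)
  · obtain ⟨d, hd⟩ := mem_span_singleton.1 (hle (mem_span_singleton_self (a n)))
    refine (hb n.lt_succ_self).not_ge (span_singleton_le_iff_mem _ _ |>.2
      (mem_span_singleton.2 ⟨f d, ?_⟩))
    rw [← ha, ← ha, smul_eq_mul, ← map_mul]
    exact congrArg f hd

theorem MinPrincipalLeft.exists_minimal {A : Type u} [Ring A] (h : MinPrincipalLeft A)
    (P : A → Prop) {x : A} (hx : P x) :
    ∃ a, P a ∧ ∀ b, P b → span A {b} ≤ span A {a} → span A {b} = span A ({a} : Set A) := by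
  have wf : WellFounded fun a b : A => span A {a} < span A {b} := by
    rw [wellFounded_iff_isEmpty_descending_chain]
    exact ⟨fun ⟨a, ha⟩ => h ⟨a, strictAnti_nat_of_succ_lt ha⟩⟩
  obtain ⟨a, ha, hmin⟩ := wf.has_min {a | P a} ⟨x, hx⟩
  exact ⟨a, ha, fun b hb hle => hle.eq_of_not_lt (hmin b hb)⟩

/-- In a ring with the minimum condition on principal left ideals and zero Jacobson radical, a
principal left ideal of least size among those with a semisimple complement must vanish:
otherwise it contains a minimal left ideal, which is a direct summand and can be split off. -/
theorem MinPrincipalLeft.isSemisimpleRing {B : Type u} [Ring B] (h : MinPrincipalLeft B)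
    (hJ : Ring.jacobson B = ⊥) : IsSemisimpleRing B := by
  obtain ⟨a, ⟨C, hC, hCa⟩, hmin⟩ := h.exists_minimal
    (fun a => ∃ C : Submodule B B, IsSemisimpleModule B C ∧ IsCompl C (span B {a})) (x := 1)
    ⟨⊥, IsSemisimpleModule.of_sSup_simples_eq_top (Subsingleton.elim _ _), by
      have h1 : span B {(1 : B)} = ⊤ := Ideal.span_singleton_one
      rw [h1]; exact isCompl_bot_top⟩
  by_cases ha : span B {a} = ⊥
  · rw [ha] at hCa
    have : C = ⊤ := by simpa using hCa.sup_eq_top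
    subst this
    exact IsSemisimpleModule.congr (Submodule.topEquiv (R := B) (M := B)).symm
  exfalso
  -- a minimal left ideal `B b` inside `B a`
  obtain ⟨b, ⟨hba, hb0⟩, hbmin⟩ := h.exists_minimal (fun b => b ∈ span B {a} ∧ b ≠ 0) (x := a)
    ⟨mem_span_singleton_self a, fun h0 => ha (by simp [h0])⟩
  have hatom : IsAtom (span B {b}) := by
    refine ⟨by simpa using hb0, fun K hK => by_contra fun hK0 => ?_⟩
    obtain ⟨x, hxK, hx0⟩ := exists_mem_ne_zero_of_ne_bot hK0
    have hxle : span B {x} ≤ K := (span_singleton_le_iff_mem _ _).2 hxK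
    have hle := (span_singleton_le_iff_mem _ _).2 hba
    have := hbmin x ⟨hle (hK.le hxK), hx0⟩ (hxle.trans hK.le)
    exact hK.not_ge (this ▸ hxle)
  -- since the radical vanishes, some maximal left ideal misses `b` and so complements `B b`
  obtain ⟨M, hM, hbM⟩ : ∃ M : Submodule B B, IsCoatom M ∧ b ∉ M := by
    by_contra! hcon
    have : b ∈ Ring.jacobson B := by
      rw [Ring.jacobson, Module.jacobson, mem_sInf]
      exact fun M hM => hcon M hM
    rw [hJ] at this
    exact hb0 (by simpa using this)
  have hbM' : IsCompl (span B {b}) M := by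
    refine ⟨disjoint_iff.2 ((IsAtom.le_iff hatom).1 inf_le_left |>.resolve_right fun h =>
        hbM (inf_eq_left.1 h (mem_span_singleton_self b))),
      codisjoint_iff.2 ((IsCoatom.le_iff hM).1 le_sup_right |>.resolve_right fun h =>
        hbM (sup_eq_right.1 h (mem_span_singleton_self b)))⟩
  have hle : span B {b} ≤ span B {a} := (span_singleton_le_iff_mem _ _).2 hba
  -- modular law
  have hsup : span B {b} ⊔ (M ⊓ span B {a}) = span B {a} := by
    rw [← sup_inf_assoc_of_le M hle, hbM'.sup_eq_top, top_inf_eq]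
  have hcompl : IsCompl (C ⊔ span B {b}) (M ⊓ span B {a}) := by
    refine ⟨disjoint_iff.2 ?_, codisjoint_iff.2 ?_⟩
    · refine (eq_bot_iff.2 fun x hx => ?_)
      obtain ⟨hx1, hxM, hxa⟩ := hx
      have h2 : (C ⊔ span B {b}) ⊓ span B {a} = span B {b} := by
        rw [sup_comm, sup_inf_assoc_of_le C hle, hCa.inf_eq_bot, sup_bot_eq]
      have h3 : x ∈ span B {b} := h2 ▸ (⟨hx1, hxa⟩ : x ∈ (C ⊔ span B {b}) ⊓ span B {a})
      exact (hbM'.inf_eq_bot ▸ (⟨h3, hxM⟩ : x ∈ span B {b} ⊓ M) : x ∈ (⊥ : Submodule B B))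
    · rw [sup_assoc, hsup, hCa.sup_eq_top]
  have hsimp : IsSimpleModule B (span B {b}) := isSimpleModule_iff_isAtom.2 hatom
  -- a direct summand of `B` is principal, generated by the component of `1`
  obtain ⟨c, hc, i, hi, hci⟩ := mem_sup.1
    (hcompl.sup_eq_top ▸ mem_top : (1 : B) ∈ (C ⊔ span B {b}) ⊔ (M ⊓ span B {a}))
  have hspan : M ⊓ span B {a} = span B {i} := by
    refine le_antisymm (fun x hx => ?_) ((span_singleton_le_iff_mem _ _).2 hi)
    have hx1 : x = x * c + x * i := by rw [← mul_add, hci, mul_one]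
    have h1 : x * c ∈ C ⊔ span B {b} := smul_mem _ x hc
    have h2 : x * c ∈ M ⊓ span B {a} := by
      rw [eq_sub_of_add_eq hx1.symm]
      exact sub_mem hx (smul_mem _ x hi)
    have h3 : x * c = 0 := by
      have : x * c ∈ (⊥ : Submodule B B) := hcompl.inf_eq_bot ▸ (⟨h1, h2⟩ : _ ∧ _)
      simpa using this
    rw [h3, zero_add] at hx1
    exact mem_span_singleton.2 ⟨x, hx1.symm⟩
  rw [hspan] at hcompl
  have heq := hmin i ⟨_, hC.sup inferInstance, hcompl⟩ (hspan ▸ inf_le_right)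
  exact hbM ((hspan.trans heq).ge.trans inf_le_left hba)

/-- T-nilpotence of a left ideal: every sequence `a₁, a₂, …` in `I` has `a₁ a₂ ⋯ aₙ = 0` for
some `n`. It is phrased for predicates instead of sequences: if `P` holds at `1`, and from every
point where it holds it can be kept by multiplying on the right with some element of `I`, then `P`
holds at `0`. -/
def IsTNilpotent {R : Type u} [Ring R] (I : Ideal R) : Prop :=
  ∀ P : R → Prop, P 1 → (∀ q, P q → ∃ a ∈ I, P (q * a)) → P 0

/-- The radical is T-nilpotent with respect to multiplication on the left: a `q` satisfying `P` with
`A q` minimal has `A (a q) = A q` for some `a` in the radical, which forces `q = 0`. -/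
theorem MinPrincipalLeft.tNilpotent {A : Type u} [Ring A] (h : MinPrincipalLeft A)
    (P : A → Prop) (h1 : P 1) (hs : ∀ q, P q → ∃ a ∈ Ring.jacobson A, P (a * q)) : P 0 := by
  obtain ⟨q, hq, hmin⟩ := h.exists_minimal P h1
  obtain ⟨a, haJ, ha⟩ := hs q hq
  have heq := hmin _ ha ((span_singleton_le_iff_mem _ _).2 (mem_span_singleton.2 ⟨a, rfl⟩))
  obtain ⟨d, hd⟩ := mem_span_singleton.1 (heq ▸ mem_span_singleton_self q : q ∈ span A {a * q})
  have hda : 1 - d * a - 1 ∈ Ideal.jacobson (⊥ : Ideal A) := by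
    rw [Ideal.jacobson_bot]
    simpa using neg_mem (Ideal.mul_mem_left _ d haJ)
  -- `q = d a q` with `1 - d a` left invertible
  obtain ⟨s, hs⟩ := Ideal.exists_mul_sub_mem_of_sub_one_mem_jacobson _ hda
  have hs1 : s * (1 - d * a) = 1 := sub_eq_zero.1 (by simpa using hs)
  have h0 : (1 - d * a) * q = 0 := by
    rw [sub_mul, one_mul, mul_assoc]; exact sub_eq_zero.2 hd.symm
  have : q = 0 := by rw [← one_mul q, ← hs1, mul_assoc, h0, mul_zero]
  exact this ▸ hq

/-! ### Nakayama and nilpotence for T-nilpotent ideals -/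

section TNilpotent

variable {R : Type u} [Ring R] {I : Ideal R}

/-- Nakayama's lemma for T-nilpotent ideals, without any finiteness assumption on `M`. -/
theorem IsTNilpotent.subsingleton (hI : IsTNilpotent I) {M : Type u} [AddCommGroup M] [Module R M]
    (h : I • (⊤ : Submodule R M) = ⊤) : Subsingleton M := by
  by_contra hM
  rw [not_subsingleton_iff_nontrivial] at hM
  have h0 := hI (fun q => ∃ m : M, q • m ≠ 0) (by simpa using exists_ne (0 : M)) ?_
  · simp at h0
  · rintro q ⟨m, hm⟩
    by_contra! hcon
    refine hm (smul_induction_on (p := fun m => q • m = 0)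
      (h.ge mem_top : m ∈ I • (⊤ : Submodule R M))
      (fun a ha x _ => ?_) fun x y hx hy => ?_)
    · rw [← mul_smul]; exact hcon a ha x
    · rw [smul_add, hx, hy, add_zero]

/-- In a left Noetherian ring a T-nilpotent left ideal is nilpotent: the left annihilators of
the powers of `I` form an ascending chain, and outside their union
right multiplication by some element of `I` stays outside. -/
theorem IsTNilpotent.isNilpotent [IsNoetherianRing R] (hI : IsTNilpotent I) :
    IsNilpotent I := by
  let K : ℕ →o Submodule R R :=
    { toFun := fun n =>
        { carrier := {x | ∀ y ∈ I ^ (n + 1), x * y = 0}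
          add_mem' := fun {a b} ha hb y hy => by rw [add_mul, ha y hy, hb y hy, add_zero]
          zero_mem' := fun y _ => zero_mul y
          smul_mem' := fun c x hx y hy => by
            rw [smul_eq_mul, mul_assoc, hx y hy, mul_zero] }
      monotone' := monotone_nat_of_le_succ fun n x hx y hy =>
        hx y (((I.pow_succ' n.succ_ne_zero).le.trans Ideal.mul_le_right) hy) }
  have hK (n : ℕ) (x : R) : x ∈ K n ↔ ∀ y ∈ I ^ (n + 1), x * y = 0 := Iff.rfl
  obtain ⟨n, hn⟩ := monotone_stabilizes_iff_noetherian.2 (inferInstance : IsNoetherian R R) K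
  refine ⟨n + 1, ?_⟩
  by_contra hne
  refine hI (fun q => q ∉ K n) (fun h1 => hne ?_) (fun q hq => ?_) (zero_mem _)
  · refine eq_bot_iff.2 fun y hy => ?_
    simpa using (hK n 1).1 h1 y hy
  · by_contra! hcon
    rw [hn (n + 1) n.le_succ] at hq
    refine hq ((hK _ _).2 fun y hy => ?_)
    rw [I.pow_succ' n.succ_ne_zero, ← smul_eq_mul] at hy
    refine smul_induction_on hy (fun a ha z hz => ?_) fun x y hx hy => by
      rw [mul_add, hx, hy, add_zero]
    rw [smul_eq_mul, ← mul_assoc]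
    exact (hK _ _).1 (hcon a ha) z hz

theorem isSemisimpleModule_of_torsion [I.IsTwoSided] [IsSemisimpleRing (R ⧸ I)] {M : Type u}
    [AddCommGroup M] [Module R M] (h : Module.IsTorsionBySet R M I) : IsSemisimpleModule R M :=
  let _ := h.module
  (h.semilinearMap.isSemisimpleModule_iff_of_bijective Function.bijective_id).2 inferInstance

theorem isTorsionBySet_quotient_smul_top {M : Type u} [AddCommGroup M] [Module R M] :
    Module.IsTorsionBySet R (M ⧸ (I • ⊤ : Submodule R M)) I := by
  rw [Module.isTorsionBySet_quotient_iff]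
  exact fun m i hi => smul_mem_smul hi trivial

variable [I.IsTwoSided]

theorem isSemisimpleModule_quotient_self [IsSemisimpleRing (R ⧸ I)] :
    IsSemisimpleModule R (R ⧸ I) :=
  isSemisimpleModule_of_torsion <| by
    rw [Module.isTorsionBySet_quotient_iff]
    exact fun m i hi => I.mul_mem_right m hi

/-- A module killed by `I` has only finitely many isotypic components, because its simple
submodules embed in the semisimple module `R ⧸ I` of finite length. -/
theorem finite_isotypicComponents [IsSemisimpleRing (R ⧸ I)] {Q : Type u} [AddCommGroup Q]
    [Module R Q] (h : Module.IsTorsionBySet R Q I) : Finite (isotypicComponents R Q) := by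
  have := isSemisimpleModule_quotient_self (I := I)
  have h1 (c : isotypicComponents R Q) : ∃ (S : Submodule R Q) (S' : Submodule R (R ⧸ I)),
      IsSimpleModule R S ∧ IsSimpleModule R S' ∧ c.1 = isotypicComponent R Q S ∧
        Nonempty (S ≃ₗ[R] S') := by
    obtain ⟨_, S, hS, rfl⟩ := c
    have := IsSimpleModule.nontrivial R S
    obtain ⟨x, hx⟩ := exists_ne (0 : S)
    let f : (R ⧸ I) →ₗ[R] S := I.liftQ (LinearMap.toSpanSingleton R S x) fun i hi => by
      rw [LinearMap.mem_ker, LinearMap.toSpanSingleton_apply]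
      exact Subtype.ext (h (x := (x : Q)) (a := ⟨i, hi⟩))
    have hf : f ≠ 0 := fun h0 => hx (by
      have h2 : f (I.mkQ 1) = x := (liftQ_apply ..).trans (one_smul R x)
      rw [← h2, h0]
      rfl)
    obtain ⟨S', ⟨e⟩⟩ := LinearMap.linearEquiv_of_ne_zero hf
    exact ⟨S, S', hS, IsSimpleModule.congr e.symm, rfl, ⟨e⟩⟩
  choose S S' hS hS' hc he using h1
  refine Finite.of_injective (β := isotypicComponents R (R ⧸ I))
    (fun c => ⟨isotypicComponent R (R ⧸ I) (S' c), S' c, hS' c, rfl⟩) fun c d hcd => ?_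
  have hle : S' c ≤ isotypicComponent R (R ⧸ I) (S' d) :=
    ((S' c).le_isotypicComponent).trans (congrArg Subtype.val hcd).le
  have := hS d
  have := hS' d
  have := hS' c
  obtain ⟨e⟩ := isIsotypicOfType_submodule_iff.1
    (IsIsotypicOfType.isotypicComponent R (R ⧸ I) (S' d)) _ hle
  obtain ⟨e1⟩ := he c
  obtain ⟨e2⟩ := he d
  refine Subtype.ext ?_
  rw [hc c, hc d]
  exact ((e1.trans e).trans e2.symm).isotypicComponent_eq

end TNilpotent

/-! ### `ℵ₀`-distributive modules -/

section Aleph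

variable {R : Type u} [Ring R] {M : Type u} [AddCommGroup M] [Module R M]

/-- An isotypic semisimple subfactor is a direct sum of copies of one simple module, so
`ℵ₀`-distributivity bounds the number of copies. -/
theorem IsAleph0Distributive.finite_of_isotypic (hM : IsAleph0Distributive R M)
    (N : Submodule R M) {C : Type u} [AddCommGroup C] [Module R C] [IsSemisimpleModule R C]
    (hC : IsIsotypic R C) (g : N →ₗ[R] C) (hg : Function.Surjective g) : Module.Finite R C := by
  obtain ⟨s, hs, htop, hsimp⟩ := IsSemisimpleModule.exists_sSupIndep_sSup_simples_eq_top R C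
  by_cases hfin : Finite s
  · refine ⟨?_⟩
    rw [← htop, sSup_eq_iSup']
    refine fg_iSup _ fun m => ?_
    have := hsimp m m.2
    exact Module.Finite.iff_fg.1 inferInstance
  exfalso
  rw [not_finite_iff_infinite] at hfin
  let e := (g.quotKerEquivOfSurjective hg).symm
  have hiso (m : s) : m.1 ≃ₗ[R] (m.1.map (e : C →ₗ[R] N ⧸ LinearMap.ker g)) := e.submoduleMap m.1
  refine hM ⟨N, LinearMap.ker g, s, hfin, fun m => m.1.map (e : C →ₗ[R] _), ?_, ?_, ?_, ?_⟩
  · exact (iSupIndep_map_orderIso_iff (orderIsoMapComap e)).2 ((sSupIndep_iff _).1 hs)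
  · rw [← Submodule.map_iSup, ← sSup_eq_iSup', htop, Submodule.map_top]
    exact LinearMap.range_eq_top.2 e.surjective
  · intro m
    have := hsimp m m.2
    exact IsSimpleModule.congr (hiso m).symm
  · intro m n
    have := hsimp m m.2
    have := hsimp n n.2
    obtain ⟨f⟩ := hC n.1 m.1
    exact ⟨((hiso m).symm.trans f).trans (hiso n)⟩

/-- `N / I N` is semisimple with finitely many isotypic components, and each of them is finitely
generated by `ℵ₀`-distributivity. -/
theorem IsAleph0Distributive.finite_quotient (hM : IsAleph0Distributive R M) {I : Ideal R}
    [I.IsTwoSided] [IsSemisimpleRing (R ⧸ I)] (N : Submodule R M) :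
    Module.Finite R (N ⧸ (I • ⊤ : Submodule R N)) := by
  have htor := isTorsionBySet_quotient_smul_top (I := I) (M := N)
  have := isSemisimpleModule_of_torsion htor
  have := finite_isotypicComponents htor
  refine ⟨?_⟩
  rw [← sSup_isotypicComponents R (N ⧸ (I • ⊤ : Submodule R N)), sSup_eq_iSup']
  refine fg_iSup _ fun c => Module.Finite.iff_fg.1 ?_
  obtain ⟨D, hD⟩ := exists_isCompl c.1
  exact hM.finite_of_isotypic N (IsIsotypic.isotypicComponents c.2)
    (c.1.projectionOnto D hD ∘ₗ mkQ _)
    ((projectionOnto_surjective hD).comp (mkQ_surjective _))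

/-- Every submodule `N` is finitely generated, since `N / I N` is, by Nakayama. -/
theorem IsAleph0Distributive.isNoetherian (hM : IsAleph0Distributive R M) {I : Ideal R}
    [I.IsTwoSided] [IsSemisimpleRing (R ⧸ I)] (hI : IsTNilpotent I) : IsNoetherian R M := by
  refine ⟨fun N => Module.Finite.iff_fg.1 ?_⟩
  obtain ⟨t, ht⟩ := (hM.finite_quotient (I := I) N).fg_top
  classical
  let F : Submodule R N := span R (Function.surjInv (mkQ_surjective (I • ⊤ : Submodule R N)) '' t)
  have hFfg : F.FG := fg_span (t.finite_toSet.image _)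
  have hF : F.map (mkQ (I • ⊤ : Submodule R N)) = ⊤ := by
    rw [map_span, ← ht, ← Set.image_comp]
    congr 1
    convert Set.image_id _
    exact funext fun x => Function.surjInv_eq _ x
  have hsup : F ⊔ I • ⊤ = (⊤ : Submodule R N) := by
    have := congrArg (comap (mkQ (I • ⊤ : Submodule R N))) hF
    rwa [comap_map_mkQ, comap_top, sup_comm] at this
  -- `N ⧸ F` equals `I` times itself
  have hq : I • (⊤ : Submodule R (N ⧸ F)) = ⊤ := by
    have := congrArg (map F.mkQ) hsup
    rwa [Submodule.map_sup, mkQ_map_self, bot_sup_eq, map_smul'', Submodule.map_top, range_mkQ] at this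
  have := hI.subsingleton hq
  rw [Submodule.Quotient.subsingleton_iff] at this
  exact ⟨this ▸ hFfg⟩

/-- A nilpotent ideal with semisimple quotient is the Jacobson radical. -/
theorem isSemiprimaryRing_of_isNilpotent {I : Ideal R} [I.IsTwoSided] [IsSemisimpleRing (R ⧸ I)]
    (hI : IsNilpotent I) : IsSemiprimaryRing R := by
  have h1 : Ring.jacobson R ≤ I :=
    Ring.jacobson_le_of_eq_bot (IsSemisimpleRing.jacobson_eq_bot _)
  obtain ⟨n, hn⟩ := hI
  have h2 : I ≤ Ring.jacobson R := by
    intro x hx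
    rw [Ring.jacobson, Module.jacobson, mem_sInf]
    intro m hm
    by_contra hxm
    have hxm' : m ⊔ span R {x} = ⊤ :=
      hm.2 _ (lt_of_le_of_ne le_sup_left fun h =>
        hxm (h ▸ mem_sup_right (mem_span_singleton_self x)))
    obtain ⟨a, ha, b, hb, hab⟩ := mem_sup.1 (hxm' ▸ mem_top : (1 : R) ∈ m ⊔ span R {x})
    have hbI : b ∈ I := (span_singleton_le_iff_mem _ _).2 hx hb
    have hbn : IsNilpotent b := ⟨n, by simpa [hn] using Ideal.pow_mem_pow hbI n⟩
    have hu := hbn.isUnit_one_sub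
    rw [← hab, add_sub_cancel_right] at hu
    exact hm.1 (Ideal.eq_top_of_isUnit_mem m ha hu)
  obtain rfl := le_antisymm h1 h2
  exact ⟨inferInstance, n, hn⟩

end Aleph

/-! ### The minimum condition in right Artinian rings -/

section Artinian

variable {A : Type u} [Ring A]

/-- The product `c (n + k - 1) * ⋯ * c (n + 1) * c n` of `k` consecutive terms. -/
def consecProd (c : ℕ → A) (n : ℕ) : ℕ → A
  | 0 => 1
  | k + 1 => c (n + k) * consecProd c n k

theorem consecProd_add (c : ℕ → A) (n j k : ℕ) :
    consecProd c n (j + k) = consecProd c (n + j) k * consecProd c n j := by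
  induction k with
  | zero => simp [consecProd]
  | succ k ih => rw [← add_assoc, consecProd, ih, consecProd, mul_assoc, add_assoc]

/-- The right ideal `x A`. -/
def rightIdeal (x : A) : Submodule Aᵐᵒᵖ A := LinearMap.range (LinearMap.mulLeft Aᵐᵒᵖ x)

theorem rightIdeal_mul_le (x y : A) : rightIdeal (x * y) ≤ rightIdeal x := by
  rintro _ ⟨t, rfl⟩
  exact ⟨y * t, (mul_assoc x y t).symm⟩

/-- A descending chain of principal left ideals is controlled by products of the connecting
elements, whose right ideals and right annihilators lie in a lattice of finite length. -/
theorem MinPrincipalLeft.of_isArtinian [IsArtinian Aᵐᵒᵖ A] [IsNoetherian Aᵐᵒᵖ A] :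
    MinPrincipalLeft A := by
  rintro ⟨a, ha⟩
  have h1 (n : ℕ) : ∃ c : A, c * a n = a (n + 1) :=
    mem_span_singleton.1 ((ha n.lt_succ_self).le (mem_span_singleton_self _))
  choose c hc using h1
  let P := consecProd c
  have hP (n k : ℕ) : P n k * a n = a (n + k) := by
    induction k with
    | zero => simp [P, consecProd]
    | succ k ih => rw [← add_assoc, ← hc, ← ih, ← mul_assoc]; rfl
  -- `v n` is the eventual (least) length of the right ideals `P n k A` as `k` grows
  let l (x : A) : ℕ∞ := Order.height (rightIdeal x)
  let v (n : ℕ) : ℕ∞ := ⨅ k, l (P n k)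
  have hv (n : ℕ) : ∃ k, l (P n k) = v n := ENat.exists_eq_iInf _
  have hvmono : Monotone v := monotone_nat_of_le_succ fun n => by
    obtain ⟨k, hk⟩ := hv (n + 1)
    rw [← hk]
    refine (iInf_le _ (1 + k)).trans ?_
    have : P n (1 + k) = P (n + 1) k * P n 1 := consecProd_add ..
    rw [this]
    exact Order.height_mono (rightIdeal_mul_le _ _)
  -- `v` is bounded by the length of `A`, hence eventually constant
  obtain ⟨n, hn⟩ : ∃ n, ∀ m, n ≤ m → v m = v n := by
    have hbd (m : ℕ) : v m ≤ Order.height (⊤ : Submodule Aᵐᵒᵖ A) :=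
      (iInf_le _ 0).trans (Order.height_mono le_top)
    have hfin : (Set.range v).Finite :=
      (ENat.finite_of_sSup_lt_top ((sSup_le (by rintro _ ⟨m, rfl⟩; exact hbd m)).trans_lt
        (Submodule.height_lt_top _)))
    obtain ⟨_, ⟨n, rfl⟩, hmax⟩ := hfin.exists_maximal (Set.range_nonempty v)
    exact ⟨n, fun m hm => le_antisymm (hmax ⟨m, rfl⟩ (hvmono hm)) (hvmono hm)⟩
  -- where `v` is constant, appending factors on the right eventually keeps the right ideal
  have hfac (j : ℕ) : ∃ k t, P n (j + k) * t = P (n + j) k := by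
    obtain ⟨k, hk⟩ := hv (n + j)
    have hmul : P n (j + k) = P (n + j) k * P n j := consecProd_add ..
    have hle : rightIdeal (P n (j + k)) ≤ rightIdeal (P (n + j) k) :=
      hmul ▸ rightIdeal_mul_le _ _
    have heq : rightIdeal (P n (j + k)) = rightIdeal (P (n + j) k) := by
      refine hle.eq_of_not_lt fun hlt => (Submodule.height_strictMono hlt).not_ge ?_
      calc l (P (n + j) k) = v n := hk.trans (hn _ (n.le_add_right j))
        _ ≤ l (P n (j + k)) := iInf_le _ _
    exact ⟨k, heq.ge ⟨1, mul_one _⟩⟩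
  -- the right annihilators of the `P n k` stabilize as well
  let K : ℕ →o Submodule Aᵐᵒᵖ A :=
    { toFun := fun k => LinearMap.ker (LinearMap.mulLeft Aᵐᵒᵖ (P n k))
      monotone' := monotone_nat_of_le_succ fun k x hx => by
        rw [LinearMap.mem_ker, LinearMap.mulLeft_apply] at hx ⊢
        change c (n + k) * P n k * x = 0
        rw [mul_assoc, hx, mul_zero] }
  obtain ⟨k₀, hk₀⟩ := monotone_stabilizes_iff_noetherian.2 (inferInstance : IsNoetherian Aᵐᵒᵖ A) K
  obtain ⟨k, t, ht⟩ := hfac (k₀ + 1)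
  have hmul : P n (k₀ + 1 + k) = P (n + (k₀ + 1)) k * P n (k₀ + 1) := consecProd_add ..
  have hker : 1 - t * P n (k₀ + 1) ∈ K (k₀ + 1 + k) := by
    change P n (k₀ + 1 + k) * _ = 0
    rw [mul_sub, mul_one, ← mul_assoc, ht, ← hmul, sub_self]
  rw [← hk₀ _ (by omega)] at hker
  have hker' : P n k₀ * (1 - t * P n (k₀ + 1)) = 0 := hker
  rw [mul_sub, mul_one, sub_eq_zero, ← mul_assoc] at hker'
  refine (ha (n + k₀).lt_succ_self).not_ge ((span_singleton_le_iff_mem _ _).2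
    (mem_span_singleton.2 ⟨P n k₀ * t, ?_⟩))
  change P n k₀ * t * a (n + (k₀ + 1)) = _
  rw [← hP n (k₀ + 1), ← mul_assoc, ← hker', hP]

end Artinian

/-! ### The equivalence -/

theorem stmt6 (A : Type u) [Ring A] :
    (IsAleph0Distributive Aᵐᵒᵖ A ∧ MinPrincipalLeft A) ↔ IsArtinian Aᵐᵒᵖ A := by
  -- the right module `A` is the left regular module of the opposite ring
  let e : A ≃ₗ[Aᵐᵒᵖ] Aᵐᵒᵖ :=
    { MulOpposite.opAddEquiv with map_smul' := fun r x => rfl }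
  constructor
  · rintro ⟨hA, hmin⟩
    have hss : IsSemisimpleRing (A ⧸ Ring.jacobson A) :=
      (hmin.of_surjective _ Ideal.Quotient.mk_surjective).isSemisimpleRing
        (Ring.jacobson_quotient_jacobson A)
    -- the kernel of `φ` is the radical, regarded as an ideal of the opposite ring
    let φ : Aᵐᵒᵖ →+* (A ⧸ Ring.jacobson A)ᵐᵒᵖ := (Ideal.Quotient.mk (Ring.jacobson A)).op
    have hφ : Function.Surjective φ := fun x => by
      obtain ⟨y, hy⟩ := Ideal.Quotient.mk_surjective x.unop
      exact ⟨MulOpposite.op y, congrArg MulOpposite.op hy⟩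
    have hmem (a : A) (ha : a ∈ Ring.jacobson A) : MulOpposite.op a ∈ RingHom.ker φ :=
      congrArg MulOpposite.op (Ideal.Quotient.eq_zero_iff_mem.2 ha)
    have : IsSemisimpleRing (Aᵐᵒᵖ ⧸ RingHom.ker φ) :=
      (RingHom.quotientKerEquivOfSurjective hφ).symm.isSemisimpleRing
    have hT : IsTNilpotent (RingHom.ker φ) := fun P h1 hs =>
      hmin.tNilpotent (fun a => P (MulOpposite.op a)) h1 fun q hq => by
        obtain ⟨a, ha, haP⟩ := hs _ hq
        exact ⟨a.unop, Ideal.Quotient.eq_zero_iff_mem.1 (congrArg MulOpposite.unop ha), haP⟩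
    have hN : IsNoetherian Aᵐᵒᵖ A := hA.isNoetherian hT
    have : IsNoetherianRing Aᵐᵒᵖ := isNoetherian_of_linearEquiv e
    have := isSemiprimaryRing_of_isNilpotent hT.isNilpotent
    exact IsSemiprimaryRing.isNoetherian_iff_isArtinian.1 hN
  · intro hA
    have : IsArtinianRing Aᵐᵒᵖ := e.isArtinian_iff.1 hA
    have : IsNoetherian Aᵐᵒᵖ A := isNoetherian_of_linearEquiv e.symm
    refine ⟨?_, .of_isArtinian⟩
    rintro ⟨N, P, ι, hι, T, hT, -, hsimp, -⟩
    refine hι.not_finite (WellFoundedGT.finite_of_iSupIndep hT fun i => ?_)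
    exact (isSimpleModule_iff_isAtom.1 (hsimp i)).1
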